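/- (Uniqueness.) Let n ≥ 1 be a natural number, let α ∈ (4n−3, 4n−1), set ν = (1−α)/2, let 0 < η < 1, let f : [0,1] × ℝ → ℝ be continuous, and suppose there exists M_λ > 0 such that (H_0) holds with λ = M_λ (that is, 0 < M_λ < j_{ν,1}², 0 < δ < 1, δ·η^ν·J_ν(η·√M_λ) − J_ν(√M_λ) ≥ 0, and J_{−ν}(√M_λ) − δ·η^ν·J_{−ν}(η·√M_λ) > 0) and such that f(x,u) − f(x,v) ≤ M_λ·(u − v) for all x ∈ [0,1] and all real numbers u, v with v ≤ u. Then the boundary value problem −(x^α·y'(x))' = x^α·f(x,y(x)) for 0 < x < 1, y'(0) = 0, y(1) = δ·y(η) has at most one solution: any two solutions coincide on [0,1]. -/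

import Mathlib

/-- The Bessel function of the first kind of real order `μ`. -/
noncomputable def besselJ (μ x : ℝ) : ℝ :=
  ∑' m : ℕ, ((-1 : ℝ) ^ m / ((m.factorial : ℝ) * Real.Gamma ((m : ℝ) + μ + 1))) *
    (x / 2) ^ (2 * (m : ℝ) + μ)

/-- `y` is a solution of the three-point singular BVP
`−(x^α y')' = x^α f(x, y)` on `(0,1)`, `y'(0) = 0`, `y(1) = δ·y(η)`:
`y` is continuous on `[0,1]`, continuously differentiable on `[0,1]`, twice
differentiable on `(0,1)`, satisfies the equation on `(0,1)` (with
`(x^α y')' = α x^{α−1} y' + x^α y''`) and both boundary conditions. -/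
def IsBVPSolution (α δ η : ℝ) (f : ℝ → ℝ → ℝ) (y : ℝ → ℝ) : Prop :=
  ContinuousOn y (Set.Icc 0 1) ∧
  (∀ x ∈ Set.Icc (0 : ℝ) 1, DifferentiableAt ℝ y x) ∧
  ContinuousOn (deriv y) (Set.Icc 0 1) ∧
  (∀ x ∈ Set.Ioo (0 : ℝ) 1, DifferentiableAt ℝ (deriv y) x) ∧
  (∀ x ∈ Set.Ioo (0 : ℝ) 1,
    -(α * x ^ (α - 1) * deriv y x + x ^ α * deriv (deriv y) x) = x ^ α * f x (y x)) ∧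
  deriv y 0 = 0 ∧ y 1 = δ * y η

/-- `u` is an upper solution of the three-point singular BVP: `u` is twice
continuously differentiable on `[0,1]`, `−(x^α u')' ≥ x^α f(x, u)` on `(0,1)`,
`u'(0) = 0` and `u(1) ≥ δ·u(η)`. -/
def IsUpperSolution (α δ η : ℝ) (f : ℝ → ℝ → ℝ) (u : ℝ → ℝ) : Prop :=
  (∀ x ∈ Set.Icc (0 : ℝ) 1, DifferentiableAt ℝ u x) ∧
  (∀ x ∈ Set.Icc (0 : ℝ) 1, DifferentiableAt ℝ (deriv u) x) ∧
  ContinuousOn (deriv (deriv u)) (Set.Icc 0 1) ∧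
  (∀ x ∈ Set.Ioo (0 : ℝ) 1,
    x ^ α * f x (u x) ≤ -(α * x ^ (α - 1) * deriv u x + x ^ α * deriv (deriv u) x)) ∧
  deriv u 0 = 0 ∧ δ * u η ≤ u 1

/-- `v` is a lower solution of the three-point singular BVP: `v` is twice
continuously differentiable on `[0,1]`, `−(x^α v')' ≤ x^α f(x, v)` on `(0,1)`,
`v'(0) = 0` and `v(1) ≤ δ·v(η)`. -/
def IsLowerSolution (α δ η : ℝ) (f : ℝ → ℝ → ℝ) (v : ℝ → ℝ) : Prop :=
  (∀ x ∈ Set.Icc (0 : ℝ) 1, DifferentiableAt ℝ v x) ∧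
  (∀ x ∈ Set.Icc (0 : ℝ) 1, DifferentiableAt ℝ (deriv v) x) ∧
  ContinuousOn (deriv (deriv v)) (Set.Icc 0 1) ∧
  (∀ x ∈ Set.Ioo (0 : ℝ) 1,
    -(α * x ^ (α - 1) * deriv v x + x ^ α * deriv (deriv v) x) ≤ x ^ α * f x (v x)) ∧
  deriv v 0 = 0 ∧ v 1 ≤ δ * v η

/-!
Let `μ = (α - 1) / 2 = -ν`. With `C_μ` the Bessel–Clifford function, `p x = C_μ (-M x² / 4)`
is a multiple of `x ^ (-μ) J_μ (√M x)`; it solves `(x ^ α p')' = -M x ^ α p` and is regular at `0`.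
It is positive on `[0, 1]`: by the Wronskian identity, the quotient of `x ^ μ C_μ (-x)` by
`C_{-μ} (-x)` has a derivative without zeros as long as its denominator does not vanish, so Rolle's
theorem excludes a zero of `C_μ (-x)` before the first zero of `C_{-μ} (-x)`; for integral `μ`
the two functions are proportional instead.

If `w` is the difference of two solutions and `r = w / p`, then `(x ^ α p² r')' r ≥ 0` by the
one-sided Lipschitz condition. As `x ^ α p² r'` vanishes at `0`, this makes `r²` monotone on
`[0, 1]`, whereas the condition at `1` reads `r 1 = (δ p(η) / p(1)) r(η)` with a factor in `[0, 1)`.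
Hence `r = 0`.
-/

open Set
open scoped Nat

lemma hasDerivAt_tsum_mul_pow {a : ℕ → ℝ} (ha : ∀ z : ℝ, Summable fun m ↦ a m * z ^ m) (z : ℝ) :
    HasDerivAt (fun z ↦ ∑' m, a m * z ^ m) (∑' m : ℕ, (m + 1) * a (m + 1) * z ^ m) z := by
  set R : ℝ := |z| + 1
  have hR : 1 ≤ R := by simp [R]
  have hzR : z ∈ Metric.ball 0 R := by simp [R]
  have term_bound (m : ℕ) (x : ℝ) (hx : x ∈ Metric.ball 0 R) :
      ‖a m * (m * x ^ (m - 1))‖ ≤ ‖a m * (2 * R) ^ m‖ := by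
    have hxR : |x| ≤ R := (by simpa using hx : |x| < R).le
    have hm : (m : ℝ) ≤ 2 ^ m := mod_cast Nat.lt_two_pow_self.le
    rw [norm_mul, norm_mul (a m)]
    gcongr
    calc ‖(m : ℝ) * x ^ (m - 1)‖ = m * |x| ^ (m - 1) := by simp
      _ ≤ 2 ^ m * R ^ (m - 1) := by gcongr
      _ ≤ 2 ^ m * R ^ m := by gcongr; exact Nat.sub_le m 1
      _ = ‖(2 * R) ^ m‖ := by rw [← mul_pow, Real.norm_of_nonneg (by positivity)]
  have bound_summable : Summable fun m ↦ ‖a m * (2 * R) ^ m‖ := (ha (2 * R)).norm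
  have termwise := hasDerivAt_tsum_of_isPreconnected bound_summable Metric.isOpen_ball
    (convex_ball 0 R).isPreconnected (fun m x _ ↦ (hasDerivAt_pow m x).const_mul (a m))
    term_bound hzR (ha z) hzR
  refine termwise.congr_deriv ?_
  rw [(Summable.of_norm_bounded bound_summable (term_bound · z hzR)).tsum_eq_zero_add]
  simp only [Nat.cast_zero, zero_mul, mul_zero, zero_add]
  exact tsum_congr fun m ↦ by push_cast; ring

/-- The Taylor coefficients `1 / (m! Γ(m + μ + 1))` of the Bessel–Clifford function. At the poles of
`Γ` the junk value `Γ = 0` gives the correct value `0` of `1 / Γ`. -/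
noncomputable def besselCliffordCoeff (μ : ℝ) (m : ℕ) : ℝ :=
  (m ! * Real.Gamma (m + μ + 1))⁻¹

/-- The Bessel–Clifford function `C_μ`, the entire function with
`J_μ t = (t / 2) ^ μ * C_μ (-t² / 4)`. -/
noncomputable def besselClifford (μ z : ℝ) : ℝ :=
  ∑' m : ℕ, besselCliffordCoeff μ m * z ^ m

lemma inv_Gamma_eq_self_mul_inv_Gamma_add_one (s : ℝ) :
    (Real.Gamma s)⁻¹ = s * (Real.Gamma (s + 1))⁻¹ := by
  rcases eq_or_ne s 0 with rfl | hs
  · simp [Real.Gamma_zero]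
  · rw [Real.Gamma_add_one hs, mul_inv, mul_inv_cancel_left₀ hs]

lemma succ_mul_besselCliffordCoeff_succ (μ : ℝ) (m : ℕ) :
    (m + 1) * besselCliffordCoeff μ (m + 1) = besselCliffordCoeff (μ + 1) m := by
  have hm : (m : ℝ) + 1 ≠ 0 := by positivity
  simp only [besselCliffordCoeff, Nat.factorial_succ, Nat.cast_mul, Nat.cast_succ, mul_inv]
  rw [mul_assoc, mul_inv_cancel_left₀ hm, add_right_comm (m : ℝ) 1 μ, ← add_assoc (m : ℝ) μ 1]

lemma besselCliffordCoeff_eq_mul_add_one (μ : ℝ) (m : ℕ) :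
    besselCliffordCoeff μ m = (m + μ + 1) * besselCliffordCoeff (μ + 1) m := by
  simp only [besselCliffordCoeff, mul_inv]
  rw [inv_Gamma_eq_self_mul_inv_Gamma_add_one, ← add_assoc (m : ℝ) μ 1]
  ring

lemma summable_besselCliffordCoeff_mul_pow (μ z : ℝ) :
    Summable fun m ↦ besselCliffordCoeff μ m * z ^ m := by
  refine .of_norm_bounded_eventually_nat (Real.summable_pow_div_factorial |z|) ?_
  filter_upwards [Filter.eventually_ge_atTop ⌈1 - μ⌉₊] with m hm
  have hm : 2 ≤ m + μ + 1 := by linarith [Nat.ceil_le.mp hm]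
  have one_le_Gamma : 1 ≤ Real.Gamma (m + μ + 1) :=
    Real.Gamma_two.symm.trans_le (Real.Gamma_strictMonoOn_Ici.monotoneOn self_mem_Ici hm hm)
  rw [besselCliffordCoeff, inv_mul_eq_div, norm_div, norm_pow, Real.norm_eq_abs,
    Real.norm_of_nonneg (by positivity)]
  gcongr
  exact le_mul_of_one_le_right (by positivity) one_le_Gamma

lemma besselClifford_zero_right (μ : ℝ) : besselClifford μ 0 = (Real.Gamma (μ + 1))⁻¹ := by
  rw [besselClifford, tsum_eq_single 0 fun m hm ↦ by simp [hm]]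
  simp [besselCliffordCoeff]

lemma hasDerivAt_besselClifford (μ z : ℝ) :
    HasDerivAt (besselClifford μ) (besselClifford (μ + 1) z) z := by
  refine (hasDerivAt_tsum_mul_pow (summable_besselCliffordCoeff_mul_pow μ) z).congr_deriv ?_
  simp only [succ_mul_besselCliffordCoeff_succ, besselClifford]

lemma continuous_besselClifford (μ : ℝ) : Continuous (besselClifford μ) :=
  continuous_iff_continuousAt.mpr fun z ↦ (hasDerivAt_besselClifford μ z).continuousAt

lemma besselClifford_recurrence (μ z : ℝ) :
    besselClifford μ z =
      (μ + 1) * besselClifford (μ + 1) z + z * besselClifford (μ + 2) z := by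
  have hs := summable_besselCliffordCoeff_mul_pow
  have tail_summable := (summable_nat_add_iff 1).mpr (hs (μ + 1) z)
  simp only [besselClifford]
  rw [(hs μ z).tsum_eq_zero_add, (hs (μ + 1) z).tsum_eq_zero_add, mul_add, ← tsum_mul_left,
    ← tsum_mul_left, add_assoc,
    ← (tail_summable.mul_left (μ + 1)).tsum_add ((hs (μ + 2) z).mul_left z)]
  congr 1
  · simp [besselCliffordCoeff_eq_mul_add_one μ 0]
  · refine tsum_congr fun m ↦ ?_
    have lower := besselCliffordCoeff_eq_mul_add_one μ (m + 1)
    have raise := succ_mul_besselCliffordCoeff_succ (μ + 1) m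
    rw [show μ + 1 + 1 = μ + 2 by ring] at raise
    push_cast at lower
    linear_combination z ^ (m + 1) * lower + z ^ (m + 1) * raise

lemma besselClifford_neg_natCast (k : ℕ) (z : ℝ) :
    besselClifford (-k) z = z ^ k * besselClifford k z := by
  have coeff_lt (m : ℕ) (hm : m < k) : besselCliffordCoeff (-k) m = 0 := by
    have hpole : (m : ℝ) + -k + 1 = -(k - m - 1 : ℕ) := by
      rw [Nat.cast_sub (by omega), Nat.cast_sub hm.le]; push_cast; ring
    rw [besselCliffordCoeff, hpole, Real.Gamma_neg_nat_eq_zero, mul_zero, inv_zero]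
  have coeff_add (m : ℕ) : besselCliffordCoeff (-k) (m + k) = besselCliffordCoeff k m := by
    simp only [besselCliffordCoeff, Nat.cast_add, add_neg_cancel_right]
    rw [Real.Gamma_nat_eq_factorial, ← Nat.cast_add m k, Real.Gamma_nat_eq_factorial, mul_comm]
  rw [besselClifford, ← (summable_besselCliffordCoeff_mul_pow _ z).sum_add_tsum_nat_add k,
    Finset.sum_eq_zero fun m hm ↦ by rw [coeff_lt m (Finset.mem_range.mp hm), zero_mul],
    zero_add, besselClifford, ← tsum_mul_left]
  exact tsum_congr fun m ↦ by rw [coeff_add, pow_add]; ring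

lemma hasDerivAt_rpow_mul_besselClifford (μ a : ℝ) {x : ℝ} (hx : 0 < x) :
    HasDerivAt (fun t ↦ t ^ (μ + 1) * besselClifford (μ + 1) (a * t))
      (x ^ μ * besselClifford μ (a * x)) x := by
  have hpow : HasDerivAt (fun t : ℝ ↦ t ^ (μ + 1)) ((μ + 1) * x ^ μ) x := by
    simpa using Real.hasDerivAt_rpow_const (p := μ + 1) (Or.inl hx.ne')
  have hC := (hasDerivAt_besselClifford (μ + 1) (a * x)).comp x ((hasDerivAt_id x).const_mul a)
  refine (hpow.mul hC).congr_deriv ?_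
  rw [besselClifford_recurrence μ, Real.rpow_add_one hx.ne', show μ + 1 + 1 = μ + 2 by ring]
  simp only [Function.comp_apply]
  ring

lemma besselClifford_wronskian (μ z : ℝ) :
    besselClifford (μ - 1) z * besselClifford (-μ) z -
        z * (besselClifford μ z * besselClifford (1 - μ) z) =
      (Real.Gamma μ)⁻¹ * (Real.Gamma (1 - μ))⁻¹ := by
  set W : ℝ → ℝ := fun z ↦ besselClifford (μ - 1) z * besselClifford (-μ) z -
    z * (besselClifford μ z * besselClifford (1 - μ) z)
  have hW (x : ℝ) : HasDerivAt W 0 x := by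
    have hprod₁ := (hasDerivAt_besselClifford (μ - 1) x).mul (hasDerivAt_besselClifford (-μ) x)
    have hprod₂ := (hasDerivAt_besselClifford μ x).mul (hasDerivAt_besselClifford (1 - μ) x)
    refine (hprod₁.sub ((hasDerivAt_id x).mul hprod₂)).congr_deriv ?_
    have rec₁ := besselClifford_recurrence (μ - 1) x
    have rec₂ := besselClifford_recurrence (-μ) x
    simp only [sub_add_cancel, neg_add_eq_sub, Pi.mul_apply, id_eq,
      show μ - 1 + 2 = μ + 1 by ring, show 1 - μ + 1 = 2 - μ by ring] at rec₁ rec₂ ⊢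
    linear_combination besselClifford (1 - μ) x * rec₁ + besselClifford μ x * rec₂
  calc W z = W 0 := is_const_of_deriv_eq_zero (fun x ↦ (hW x).differentiableAt)
        (fun x ↦ (hW x).deriv) z 0
    _ = _ := by simp [W, besselClifford_zero_right, neg_add_eq_sub]

lemma hasDerivAt_rpow_mul_besselClifford_div {μ x : ℝ} (hx : 0 < x)
    (hne : besselClifford (-μ) (-x) ≠ 0) :
    HasDerivAt (fun t ↦ t ^ μ * besselClifford μ (-t) / besselClifford (-μ) (-t))
      (x ^ (μ - 1) * ((Real.Gamma μ)⁻¹ * (Real.Gamma (1 - μ))⁻¹) /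
        besselClifford (-μ) (-x) ^ 2) x := by
  have hnum := hasDerivAt_rpow_mul_besselClifford (μ - 1) (-1) hx
  have hden := (hasDerivAt_besselClifford (-μ) (-x)).comp x (hasDerivAt_neg x)
  simp only [sub_add_cancel, neg_one_mul] at hnum
  refine (hnum.div hden hne).congr_deriv ?_
  have hpow : x ^ μ = x ^ (μ - 1) * x := by rw [← Real.rpow_add_one hx.ne', sub_add_cancel]
  rw [← besselClifford_wronskian μ (-x), hpow, neg_add_eq_sub]
  simp only [Function.comp_apply]
  ring

lemma besselClifford_ne_zero_of_neg_order_ne_zero {μ z : ℝ} (hμ : 0 ≤ μ) (hz : 0 < z)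
    (hne : ∀ t ∈ Ioc 0 z, besselClifford (-μ) (-t) ≠ 0) : besselClifford μ (-z) ≠ 0 := by
  by_cases hnat : ∃ k : ℕ, μ = k
  · obtain ⟨k, rfl⟩ := hnat
    have := hne z (right_mem_Ioc.mpr hz)
    rw [besselClifford_neg_natCast] at this
    exact right_ne_zero_of_mul this
  have hμ_pos : 0 < μ := hμ.lt_of_ne' fun h ↦ hnat ⟨0, by simpa using h⟩
  have hΓ : Real.Gamma (1 - μ) ≠ 0 :=
    Real.Gamma_ne_zero fun m hm ↦ hnat ⟨m + 1, by push_cast; linarith⟩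
  have hne_Icc : ∀ t ∈ Icc 0 z, besselClifford (-μ) (-t) ≠ 0 := by
    rintro t ⟨ht0, htz⟩
    rcases ht0.eq_or_lt with rfl | ht0
    · simpa [besselClifford_zero_right, neg_add_eq_sub] using hΓ
    · exact hne t ⟨ht0, htz⟩
  intro hzero
  have hcont : ContinuousOn
      (fun t ↦ t ^ μ * besselClifford μ (-t) / besselClifford (-μ) (-t)) (Icc 0 z) :=
    ((Real.continuous_rpow_const hμ).mul
      ((continuous_besselClifford μ).comp continuous_neg)).continuousOn.div
      ((continuous_besselClifford (-μ)).comp continuous_neg).continuousOn hne_Icc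
  obtain ⟨c, hc, hderiv⟩ := exists_hasDerivAt_eq_zero hz hcont
    (by simp [hzero, Real.zero_rpow hμ_pos.ne'])
    fun x hx ↦ hasDerivAt_rpow_mul_besselClifford_div hx.1 (hne_Icc x (Ioo_subset_Icc_self hx))
  have hc_ne := hne_Icc c (Ioo_subset_Icc_self hc)
  have hc_pow := Real.rpow_pos_of_pos hc.1 (μ - 1)
  have := Real.Gamma_pos_of_pos hμ_pos
  exact absurd hderiv (by positivity)

lemma besselClifford_neg_pos_of_neg_order_ne_zero {μ K z : ℝ} (hμ : 0 ≤ μ)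
    (hne : ∀ t ∈ Ioc 0 K, besselClifford (-μ) (-t) ≠ 0) (hz : z ∈ Icc 0 K) :
    0 < besselClifford μ (-z) := by
  have hpos_zero : 0 < besselClifford μ (-0) := by
    have := Real.Gamma_pos_of_pos (show 0 < μ + 1 by linarith)
    rw [neg_zero, besselClifford_zero_right]
    positivity
  by_contra! hle
  obtain ⟨c, hc, hczero⟩ := intermediate_value_Icc' hz.1
    ((continuous_besselClifford μ).comp continuous_neg).continuousOn ⟨hle, hpos_zero.le⟩
  have hc_pos : 0 < c := hc.1.lt_of_ne (by rintro rfl; exact hpos_zero.ne' hczero)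
  exact besselClifford_ne_zero_of_neg_order_ne_zero hμ hc_pos
    (fun t ht ↦ hne t ⟨ht.1, ht.2.trans (hc.2.trans hz.2)⟩) hczero

lemma besselJ_eq_rpow_mul_besselClifford (μ : ℝ) {t : ℝ} (ht : 0 < t) :
    besselJ μ t = (t / 2) ^ μ * besselClifford μ (-(t ^ 2 / 4)) := by
  rw [besselJ, besselClifford, ← tsum_mul_left]
  refine tsum_congr fun m ↦ ?_
  have hpow : (t / 2) ^ (2 * (m : ℝ)) = (t ^ 2 / 4) ^ m := by
    rw [Real.rpow_mul (by positivity), Real.rpow_natCast, Real.rpow_two, div_pow]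
    norm_num
  rw [Real.rpow_add (by positivity), hpow, neg_pow (t ^ 2 / 4), besselCliffordCoeff, div_eq_mul_inv]
  ring

section NormalizedBessel

/-- The multiple of `x ^ (-μ) * J_μ (√M * x)` that is entire in `x`; it is the solution of
`(x ^ (2μ + 1) y')' = -M x ^ (2μ + 1) y` that is regular at `0`. -/
noncomputable def normalizedBessel (μ M x : ℝ) : ℝ :=
  besselClifford μ (-(M * x ^ 2 / 4))

variable {μ M x : ℝ}

lemma hasDerivAt_normalizedBessel (μ M x : ℝ) :
    HasDerivAt (normalizedBessel μ M) (-(M * x / 2) * normalizedBessel (μ + 1) M x) x := by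
  have hinner : HasDerivAt (fun t : ℝ ↦ -(M * t ^ 2 / 4)) (-(M * x / 2)) x :=
    (((hasDerivAt_pow 2 x).const_mul M).div_const 4).neg.congr_deriv (by push_cast; ring)
  exact ((hasDerivAt_besselClifford μ _).comp x hinner).congr_deriv (mul_comm _ _)

lemma continuous_normalizedBessel (μ M : ℝ) : Continuous (normalizedBessel μ M) :=
  continuous_iff_continuousAt.mpr fun x ↦ (hasDerivAt_normalizedBessel μ M x).continuousAt

lemma rpow_neg_mul_besselJ_mul_sqrt (hM : 0 < M) (hx : 0 < x) :
    x ^ (-μ) * besselJ μ (x * √M) = (√M / 2) ^ μ * normalizedBessel μ M x := by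
  have hcancel : x ^ (-μ) * x ^ μ = 1 := by rw [← Real.rpow_add hx, neg_add_cancel, Real.rpow_zero]
  rw [besselJ_eq_rpow_mul_besselClifford μ (by positivity), mul_div_assoc,
    Real.mul_rpow hx.le (by positivity), mul_pow, Real.sq_sqrt hM.le, normalizedBessel,
    mul_comm (x ^ 2) M]
  linear_combination (√M / 2) ^ μ * besselClifford μ (-(M * x ^ 2 / 4)) * hcancel

lemma normalizedBessel_pos_of_besselJ_neg_order_ne_zero (hμ : 0 ≤ μ) (hM : 0 < M)
    (hne : ∀ t, 0 < t → t ≤ √M → besselJ (-μ) t ≠ 0) (hx : x ∈ Icc 0 1) :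
    0 < normalizedBessel μ M x := by
  refine besselClifford_neg_pos_of_neg_order_ne_zero (K := M / 4) hμ (fun z hz hzero ↦ ?_) ⟨?_, ?_⟩
  · have hz_sqrt : 0 < √z := Real.sqrt_pos.mpr hz.1
    have harg : (2 * √z) ^ 2 = 4 * z := by rw [mul_pow, Real.sq_sqrt hz.1.le]; norm_num
    refine hne (2 * √z) (by positivity) (Real.le_sqrt_of_sq_le (by linarith [hz.2])) ?_
    rw [besselJ_eq_rpow_mul_besselClifford _ (by positivity), harg,
      mul_div_cancel_left₀ z four_ne_zero, hzero, mul_zero]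
  · positivity
  · have : x ^ 2 ≤ 1 := pow_le_one₀ hx.1 hx.2
    nlinarith

end NormalizedBessel

/-- The equation `(k y')' = h` on `(a, b)` for a function `y` that is `C¹` on `[a, b]`. The
derivative `y'` is a parameter, so that its endpoint values are those of its continuous extension
and not the possibly junk ones of `deriv y`. -/
structure IsFluxSolution (k h : ℝ → ℝ) (a b : ℝ) (y y' : ℝ → ℝ) : Prop where
  continuousOn : ContinuousOn y (Icc a b)
  continuousOn_deriv : ContinuousOn y' (Icc a b)
  hasDerivAt : ∀ x ∈ Ioo a b, HasDerivAt y (y' x) x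
  hasDerivAt_flux : ∀ x ∈ Ioo a b, HasDerivAt (fun t ↦ k t * y' t) (h x) x

lemma isFluxSolution_normalizedBessel (μ M : ℝ) {a b : ℝ} (ha : 0 ≤ a) :
    IsFluxSolution (fun x ↦ x ^ (2 * μ + 1))
      (fun x ↦ -(M * x ^ (2 * μ + 1) * normalizedBessel μ M x)) a b
      (normalizedBessel μ M) (fun x ↦ -(M * x / 2) * normalizedBessel (μ + 1) M x) where
  continuousOn := (continuous_normalizedBessel μ M).continuousOn
  continuousOn_deriv := by
    have := continuous_normalizedBessel (μ + 1) M
    fun_prop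
  hasDerivAt x _ := hasDerivAt_normalizedBessel μ M x
  hasDerivAt_flux x hx := by
    have hx0 : 0 < x := ha.trans_lt hx.1
    have hpow := Real.hasDerivAt_rpow_const (p := 2 * μ + 1) (Or.inl hx0.ne')
    have hlin : HasDerivAt (fun t ↦ -(M * t / 2)) (-(M / 2)) x :=
      (((hasDerivAt_id x).const_mul M).div_const 2).neg.congr_deriv (by rw [mul_one])
    refine (hpow.mul (hlin.mul (hasDerivAt_normalizedBessel (μ + 1) M x))).congr_deriv ?_
    have recurrence : normalizedBessel μ M x = (μ + 1) * normalizedBessel (μ + 1) M x +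
        -(M * x ^ 2 / 4) * normalizedBessel (μ + 2) M x := besselClifford_recurrence μ _
    rw [recurrence, Real.rpow_add_one hx0.ne', add_sub_cancel_right, show μ + 1 + 1 = μ + 2 by ring]
    simp only [Pi.mul_apply]
    ring

lemma IsBVPSolution.isFluxSolution {α δ η : ℝ} {f : ℝ → ℝ → ℝ} {y : ℝ → ℝ}
    (hy : IsBVPSolution α δ η f y) :
    IsFluxSolution (fun x ↦ x ^ α) (fun x ↦ -(x ^ α * f x (y x))) 0 1 y (deriv y) := by
  obtain ⟨hcont, hdiff, hcont', hdiff', hode, -, -⟩ := hy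
  refine ⟨hcont, hcont', fun x hx ↦ (hdiff x (Ioo_subset_Icc_self hx)).hasDerivAt, fun x hx ↦ ?_⟩
  have hpow := Real.hasDerivAt_rpow_const (p := α) (Or.inl hx.1.ne')
  exact (hpow.mul (hdiff' x hx).hasDerivAt).congr_deriv (by linarith [hode x hx])

namespace IsFluxSolution

variable {k h l w w' p p' : ℝ → ℝ} {a b : ℝ}

lemma sub (hw : IsFluxSolution k h a b w w') (hp : IsFluxSolution k l a b p p') :
    IsFluxSolution k (h - l) a b (w - p) (w' - p') where
  continuousOn := hw.continuousOn.sub hp.continuousOn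
  continuousOn_deriv := hw.continuousOn_deriv.sub hp.continuousOn_deriv
  hasDerivAt x hx := (hw.hasDerivAt x hx).sub (hp.hasDerivAt x hx)
  hasDerivAt_flux x hx :=
    ((hw.hasDerivAt_flux x hx).sub (hp.hasDerivAt_flux x hx)).congr_of_eventuallyEq
      (.of_forall fun t ↦ mul_sub (k t) (w' t) (p' t))

lemma hasDerivAt_wronskian (hw : IsFluxSolution k h a b w w') (hp : IsFluxSolution k l a b p p')
    {x : ℝ} (hx : x ∈ Ioo a b) :
    HasDerivAt (fun t ↦ k t * (w' t * p t - w t * p' t)) (h x * p x - w x * l x) x := by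
  have hflux := ((hw.hasDerivAt_flux x hx).mul (hp.hasDerivAt x hx)).sub
    ((hw.hasDerivAt x hx).mul (hp.hasDerivAt_flux x hx))
  refine (hflux.congr_deriv (by ring)).congr_of_eventuallyEq (.of_forall fun t ↦ ?_)
  simp only [Pi.sub_apply, Pi.mul_apply]
  ring

end IsFluxSolution

section Comparison

variable {a b : ℝ}

lemma monotoneOn_Icc_of_hasDerivAt_nonneg {u u' : ℝ → ℝ} (hu : ContinuousOn u (Icc a b))
    (hu' : ∀ x ∈ Ioo a b, HasDerivAt u (u' x) x) (hnonneg : ∀ x ∈ Ioo a b, 0 ≤ u' x) :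
    MonotoneOn u (Icc a b) := by
  rw [← interior_Icc] at hu' hnonneg
  exact monotoneOn_of_hasDerivWithinAt_nonneg (convex_Icc a b) hu
    (fun x hx ↦ (hu' x hx).hasDerivWithinAt) hnonneg

lemma monotoneOn_sq_of_flux_mul_nonneg {r r' ρ flux flux' : ℝ → ℝ} (hr : ContinuousOn r (Icc a b))
    (hr' : ∀ x ∈ Ioo a b, HasDerivAt r (r' x) x) (hρ : ∀ x ∈ Ioo a b, 0 < ρ x)
    (hflux : ∀ x ∈ Ioo a b, flux x = ρ x * r' x) (hfluxc : ContinuousOn flux (Icc a b))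
    (hflux' : ∀ x ∈ Ioo a b, HasDerivAt flux (flux' x) x) (hfluxa : 0 ≤ flux a * r a)
    (hsign : ∀ x ∈ Ioo a b, 0 ≤ flux' x * r x) :
    MonotoneOn (fun x ↦ r x ^ 2) (Icc a b) := by
  have flux_mul_mono : MonotoneOn (fun x ↦ flux x * r x) (Icc a b) := by
    refine monotoneOn_Icc_of_hasDerivAt_nonneg (hfluxc.mul hr)
      (fun x hx ↦ (hflux' x hx).mul (hr' x hx)) fun x hx ↦ add_nonneg (hsign x hx) ?_
    rw [hflux x hx, mul_assoc]
    exact mul_nonneg (hρ x hx).le (mul_self_nonneg _)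
  refine monotoneOn_Icc_of_hasDerivAt_nonneg (hr.pow 2) (fun x hx ↦ (hr' x hx).pow 2) fun x hx ↦ ?_
  have flux_mul_nonneg : 0 ≤ flux x * r x :=
    hfluxa.trans (flux_mul_mono (left_mem_Icc.mpr (hx.1.trans hx.2).le) (Ioo_subset_Icc_self hx)
      hx.1.le)
  rw [hflux x hx, mul_assoc] at flux_mul_nonneg
  have := nonneg_of_mul_nonneg_right flux_mul_nonneg (hρ x hx)
  push_cast
  linarith

lemma IsFluxSolution.monotoneOn_sq_div {k h l w w' p p' : ℝ → ℝ}
    (hw : IsFluxSolution k h a b w w') (hp : IsFluxSolution k l a b p p')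
    (hk : ContinuousOn k (Icc a b)) (hk_pos : ∀ x ∈ Ioo a b, 0 < k x) (hka : k a = 0)
    (hp_pos : ∀ x ∈ Icc a b, 0 < p x)
    (hsign : ∀ x ∈ Ioo a b, 0 ≤ (h x * p x - w x * l x) * w x) :
    MonotoneOn (fun x ↦ (w x / p x) ^ 2) (Icc a b) := by
  have hp_pos' : ∀ x ∈ Ioo a b, 0 < p x := fun x hx ↦ hp_pos x (Ioo_subset_Icc_self hx)
  refine monotoneOn_sq_of_flux_mul_nonneg (ρ := fun x ↦ k x * p x ^ 2)
    (flux := fun x ↦ k x * (w' x * p x - w x * p' x))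
    (hw.continuousOn.div hp.continuousOn fun x hx ↦ (hp_pos x hx).ne')
    (fun x hx ↦ (hw.hasDerivAt x hx).div (hp.hasDerivAt x hx) (hp_pos' x hx).ne')
    (fun x hx ↦ mul_pos (hk_pos x hx) (pow_pos (hp_pos' x hx) 2)) (fun x hx ↦ ?_)
    (hk.mul ((hw.continuousOn_deriv.mul hp.continuousOn).sub
      (hw.continuousOn.mul hp.continuousOn_deriv)))
    (fun x hx ↦ hw.hasDerivAt_wronskian hp hx) (by simp [hka]) fun x hx ↦ ?_
  · rw [mul_assoc, mul_div_cancel₀ _ (pow_pos (hp_pos' x hx) 2).ne']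
  · rw [← mul_div_assoc]
    exact div_nonneg (hsign x hx) (hp_pos' x hx).le

lemma eqOn_zero_of_monotoneOn_sq_div {w p : ℝ → ℝ} {δ η : ℝ} (hη : η ∈ Icc a b) (hδ : 0 ≤ δ)
    (hp_pos : ∀ x ∈ Icc a b, 0 < p x)
    (hmono : MonotoneOn (fun x ↦ (w x / p x) ^ 2) (Icc a b))
    (hpb : δ * p η < p b) (hwb : w b = δ * w η) : EqOn w 0 (Icc a b) := by
  have hb : b ∈ Icc a b := right_mem_Icc.mpr (hη.1.trans hη.2)
  have hpη := hp_pos η hη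
  have hpb_pos := hp_pos b hb
  have quotient_b : w b / p b = δ * p η / p b * (w η / p η) := by
    rw [hwb]
    field_simp
  have factor_sq_lt : (δ * p η / p b) ^ 2 < 1 :=
    pow_lt_one₀ (by positivity) ((div_lt_one hpb_pos).mpr hpb) two_ne_zero
  have hη_le : (w η / p η) ^ 2 ≤ (δ * p η / p b) ^ 2 * (w η / p η) ^ 2 := by
    rw [← mul_pow, ← quotient_b]
    exact hmono hη hb hη.2
  have quotient_η : w η / p η = 0 := by
    by_contra hne
    exact absurd hη_le (not_le.mpr (mul_lt_of_lt_one_left (by positivity) factor_sq_lt))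
  intro x hx
  have hx_le : (w x / p x) ^ 2 ≤ (w b / p b) ^ 2 := hmono hx hb hx.2
  rw [quotient_b, quotient_η, mul_zero, zero_pow two_ne_zero, sq_nonpos_iff] at hx_le
  exact (div_eq_zero_iff.mp hx_le).resolve_right (hp_pos x hx).ne'

lemma mul_sub_sub_mul_nonneg_of_one_sided_lipschitz {g : ℝ → ℝ} {M : ℝ}
    (hg : ∀ u v, v ≤ u → g u - g v ≤ M * (u - v)) (u v : ℝ) :
    0 ≤ (M * (u - v) - (g u - g v)) * (u - v) := by
  rcases le_total v u with hvu | huv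
  · exact mul_nonneg (sub_nonneg.mpr (hg u v hvu)) (sub_nonneg.mpr hvu)
  · exact mul_nonneg_of_nonpos_of_nonpos (by linarith [hg v u huv]) (sub_nonpos.mpr huv)

end Comparison

lemma IsBVPSolution.eqOn_of_comparison {α δ η M : ℝ} {f : ℝ → ℝ → ℝ} {p p' y₁ y₂ : ℝ → ℝ}
    (h₁ : IsBVPSolution α δ η f y₁) (h₂ : IsBVPSolution α δ η f y₂)
    (hα : 0 < α) (hη : η ∈ Icc 0 1) (hδ : 0 ≤ δ)
    (hlip : ∀ x ∈ Ioo (0 : ℝ) 1, ∀ u v : ℝ, v ≤ u → f x u - f x v ≤ M * (u - v))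
    (hp : IsFluxSolution (fun x ↦ x ^ α) (fun x ↦ -(M * x ^ α * p x)) 0 1 p p')
    (hp_pos : ∀ x ∈ Icc 0 1, 0 < p x) (hp_one : δ * p η < p 1) :
    EqOn y₁ y₂ (Icc 0 1) := by
  have sq_div_mono := (h₁.isFluxSolution.sub h₂.isFluxSolution).monotoneOn_sq_div hp
    (Real.continuous_rpow_const hα.le).continuousOn (fun x hx ↦ Real.rpow_pos_of_pos hx.1 α)
    (Real.zero_rpow hα.ne') hp_pos fun x hx ↦ by
      have hpx := hp_pos x (Ioo_subset_Icc_self hx)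
      have hxα := Real.rpow_pos_of_pos hx.1 α
      have hsign := mul_sub_sub_mul_nonneg_of_one_sided_lipschitz (hlip x hx) (y₁ x) (y₂ x)
      refine (mul_nonneg (mul_pos hxα hpx).le hsign).trans_eq ?_
      simp only [Pi.sub_apply]
      ring
  obtain ⟨-, -, -, -, -, -, hy₁⟩ := h₁
  obtain ⟨-, -, -, -, -, -, hy₂⟩ := h₂
  have w_eq_zero := eqOn_zero_of_monotoneOn_sq_div hη hδ hp_pos sq_div_mono hp_one
    (by simp only [Pi.sub_apply]; rw [hy₁, hy₂, mul_sub])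
  exact fun x hx ↦ sub_eq_zero.mp (w_eq_zero hx)

theorem uniqueness_general {α δ η ν M : ℝ} {f : ℝ → ℝ → ℝ} (hα : 1 ≤ α) (hν : ν = (1 - α) / 2)
    (hη0 : 0 < η) (hη1 : η ≤ 1) (hδ : 0 ≤ δ) (hM : 0 < M)
    (hzero : ∀ t, 0 < t → t ≤ √M → besselJ ν t ≠ 0)
    (hboundary : 0 < besselJ (-ν) √M - δ * η ^ ν * besselJ (-ν) (η * √M))
    (hlip : ∀ x ∈ Ioo (0 : ℝ) 1, ∀ u v : ℝ, v ≤ u → f x u - f x v ≤ M * (u - v))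
    {y₁ y₂ : ℝ → ℝ} (h₁ : IsBVPSolution α δ η f y₁) (h₂ : IsBVPSolution α δ η f y₂) :
    EqOn y₁ y₂ (Icc 0 1) := by
  have hα_eq : 2 * (-ν) + 1 = α := by rw [hν]; ring
  have hp := isFluxSolution_normalizedBessel (-ν) M (b := 1) le_rfl
  rw [hα_eq] at hp
  have hp_pos : ∀ x ∈ Icc 0 1, 0 < normalizedBessel (-ν) M x := fun x hx ↦
    normalizedBessel_pos_of_besselJ_neg_order_ne_zero (by linarith) hM (by rwa [neg_neg]) hx
  have hp_one : δ * normalizedBessel (-ν) M η < normalizedBessel (-ν) M 1 := by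
    have hJη := rpow_neg_mul_besselJ_mul_sqrt (μ := -ν) hM hη0
    have hJ1 := rpow_neg_mul_besselJ_mul_sqrt (μ := -ν) hM one_pos
    simp only [neg_neg, Real.one_rpow, one_mul] at hJη hJ1
    rw [mul_assoc, hJη, hJ1] at hboundary
    have hscale : 0 < (√M / 2) ^ (-ν) := by positivity
    exact lt_of_mul_lt_mul_left (by linarith) hscale.le
  exact h₁.eqOn_of_comparison h₂ (by linarith) ⟨hη0.le, hη1⟩ hδ hlip hp hp_pos hp_one

/-- **Theorem 5.4 (uniqueness).** For `α ∈ (4n−3, 4n−1)`, `ν = (1−α)/2`,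
`0 < η < 1`, `f : [0,1] × ℝ → ℝ` continuous, and `M_λ > 0` such that `(H₀)`
holds with `λ = M_λ` and `f(x,u) − f(x,v) ≤ M_λ·(u − v)` whenever `v ≤ u`:
the BVP `−(x^α y')' = x^α f(x,y)`, `y'(0) = 0`, `y(1) = δ·y(η)` has at most
one solution. -/
theorem uniqueness (n : ℕ) (hn : 1 ≤ n) (α δ η ν : ℝ)
    (hα1 : 4 * (n : ℝ) - 3 < α) (hα2 : α < 4 * (n : ℝ) - 1)
    (hν : ν = (1 - α) / 2)
    (hη0 : 0 < η) (hη1 : η < 1)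
    (f : ℝ → ℝ → ℝ)
    (hfcont : ContinuousOn (fun p : ℝ × ℝ => f p.1 p.2)
      (Set.Icc (0 : ℝ) 1 ×ˢ (Set.univ : Set ℝ)))
    (Mlam : ℝ) (hM : 0 < Mlam)
    (hzero : ∀ t : ℝ, 0 < t → t ≤ Real.sqrt Mlam → besselJ ν t ≠ 0)
    (hδ0 : 0 < δ) (hδ1 : δ < 1)
    (hH1 : 0 ≤ δ * η ^ ν * besselJ ν (η * Real.sqrt Mlam) - besselJ ν (Real.sqrt Mlam))
    (hH2 : 0 < besselJ (-ν) (Real.sqrt Mlam)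
        - δ * η ^ ν * besselJ (-ν) (η * Real.sqrt Mlam))
    (hlip : ∀ x ∈ Set.Icc (0 : ℝ) 1, ∀ u v : ℝ, v ≤ u →
      f x u - f x v ≤ Mlam * (u - v)) :
    ∀ y₁ y₂ : ℝ → ℝ, IsBVPSolution α δ η f y₁ → IsBVPSolution α δ η f y₂ →
      ∀ x ∈ Set.Icc (0 : ℝ) 1, y₁ x = y₂ x := by
  have hα : 1 ≤ α := by linarith [show (1 : ℝ) ≤ n from mod_cast hn]
  exact fun y₁ y₂ h₁ h₂ ↦ uniqueness_general hα hν hη0 hη1.le hδ0.le hM hzero hH2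
    (fun x hx ↦ hlip x (Ioo_subset_Icc_self hx)) h₁ h₂
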